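/- For each g ∈ G, the set D_g := {Γ ∈ 𝒳_Y : g ∈ V(Γ)} is an order ideal of the meet-semilattice (𝒳_Y, reverse inclusion), and the maps φ_g : D_{g⁻¹} → D_g, Γ ↦ gΓ, form a partial action of G on 𝒳_Y by order isomorphisms between order ideals: each φ_g is an order isomorphism from D_{g⁻¹} onto D_g, D_1 = 𝒳_Y with φ_1 = id, φ_{g⁻¹} = (φ_g)⁻¹, and whenever Γ ∈ D_{h⁻¹} and φ_h(Γ) ∈ D_{g⁻¹}, also Γ ∈ D_{(gh)⁻¹} and φ_{gh}(Γ) = φ_g(φ_h(Γ)). Moreover, for all (A,g), (B,h) ∈ M(G,Y) one has φ_g(φ_{g⁻¹}(A) ∪ B) = A ∪ gB, so the partial action product 𝒳_Y ⋊ G coincides with M(G,Y). -/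

import Mathlib

namespace FInvPaper

/-- The extended alphabet `Y = X ⊔ Ḡ`, with `Ḡ` a bijective copy of `G`. -/
abbrev YT (X G : Type*) := X ⊕ G

/-- The extension `ι_Y : Y → G` of the assignment map `ι : X → G`. -/
def iotaY {X G : Type*} (ι : X → G) : YT X G → G := Sum.elim ι id

/-- A (candidate) subgraph of `Cay(G,Y)`: a set of vertices together with a set
of positive edges, an edge `(a, y)` joining `a` to `a * ι_Y y`. -/
abbrev Graph (X G : Type*) := Set G × Set (G × YT X G)

variable {X G : Type*} [Group G]

/-- `Γ` is a finite subgraph of `Cay(G,Y)` containing the origin. -/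
def IsSubgraph (ι : X → G) (Γ : Graph X G) : Prop :=
  Γ.1.Finite ∧ Γ.2.Finite ∧ (1 : G) ∈ Γ.1 ∧
    ∀ e ∈ Γ.2, e.1 ∈ Γ.1 ∧ e.1 * iotaY ι e.2 ∈ Γ.1

/-- The relation on vertices given by the positive edges of `Γ`. -/
def edgeRel (ι : X → G) (Γ : Graph X G) (a b : G) : Prop :=
  ∃ y : YT X G, (a, y) ∈ Γ.2 ∧ b = a * iotaY ι y

/-- `Γ` is connected: every vertex is related to the origin `1` by the
equivalence relation generated by the edge relation. -/
def IsConn (ι : X → G) (Γ : Graph X G) : Prop :=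
  ∀ v ∈ Γ.1, Relation.EqvGen (edgeRel ι Γ) 1 v

/-- `𝒳_Y`: all finite connected subgraphs of `Cay(G,Y)` containing the origin. -/
def XY (ι : X → G) : Set (Graph X G) :=
  {Γ | IsSubgraph ι Γ ∧ IsConn ι Γ}

/-- The translate `gΓ`. -/
def gmul (g : G) (Γ : Graph X G) : Graph X G :=
  ((g * ·) '' Γ.1, (fun e => (g * e.1, e.2)) '' Γ.2)

/-- Componentwise union of graphs. -/
def gunion (Γ Δ : Graph X G) : Graph X G := (Γ.1 ∪ Δ.1, Γ.2 ∪ Δ.2)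

/-- Componentwise inclusion of graphs. -/
def gsub (Γ Δ : Graph X G) : Prop := Γ.1 ⊆ Δ.1 ∧ Γ.2 ⊆ Δ.2

/-- The closure `Γ^∧` of `Γ`: add the edge `(a, \overline{a⁻¹b})` for all
vertices `a, b` of `Γ`. -/
def clo (Γ : Graph X G) : Graph X G :=
  (Γ.1, Γ.2 ∪ {e : G × YT X G | ∃ a ∈ Γ.1, ∃ b ∈ Γ.1, e = (a, Sum.inr (a⁻¹ * b))})

/-- `Γ` is closed. -/
def IsClosedGr (Γ : Graph X G) : Prop :=
  ∀ a ∈ Γ.1, ∀ b ∈ Γ.1, (a, (Sum.inr (a⁻¹ * b) : YT X G)) ∈ Γ.2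

/-- `𝒳_Y^∧`: all closed graphs in `𝒳_Y`. -/
def XYw (ι : X → G) : Set (Graph X G) := {Γ | Γ ∈ XY ι ∧ IsClosedGr Γ}

/-- The graph `Γ_1` with single vertex `1` and no edges. -/
def gammaOne : Graph X G := ({1}, ∅)

/-- The graph `Γ_x` for `x ∈ X`. -/
def gammaX (ι : X → G) (x : X) : Graph X G :=
  ({1, ι x}, {((1 : G), (Sum.inl x : YT X G))})

/-- The graph `Γ_ḡ` for `g ∈ G`. -/
def gammaBar (g : G) : Graph X G :=
  ({1, g}, {((1 : G), (Sum.inr g : YT X G))})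

/-- Raw elements: pairs `(Γ, g)`. -/
abbrev Elt (X G : Type*) := Graph X G × G

/-- The carrier of `M(G,Y)`. -/
def Mset (ι : X → G) : Set (Elt X G) := {p | p.1 ∈ XY ι ∧ p.2 ∈ p.1.1}

/-- Multiplication of `M(G,Y)`: `(A,g)(B,h) = (A ∪ gB, gh)`. -/
def mulM (p q : Elt X G) : Elt X G := (gunion p.1 (gmul p.2 q.1), p.2 * q.2)

/-- Inversion: `(A,g)⁻¹ = (g⁻¹A, g⁻¹)`. -/
def invM (p : Elt X G) : Elt X G := (gmul p.2⁻¹ p.1, p.2⁻¹)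

/-- The carrier of `M^∧(G,Y)`. -/
def Mwedge (ι : X → G) : Set (Elt X G) := {p | p.1 ∈ XYw ι ∧ p.2 ∈ p.1.1}

/-- Multiplication of `M^∧(G,Y)`: `(A,g)(B,h) = ((A ∪ gB)^∧, gh)`. -/
def mulW (p q : Elt X G) : Elt X G := (clo (gunion p.1 (gmul p.2 q.1)), p.2 * q.2)

/-- Natural partial order of `M^∧(G,Y)`: `s ≤ t` iff `s = s s⁻¹ t`. -/
def nleW (p q : Elt X G) : Prop := p = mulW (mulW p (invM p)) q

/-- Minimum group congruence `σ` of `M^∧(G,Y)`. -/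
def sigmaW (ι : X → G) (p q : Elt X G) : Prop :=
  ∃ u ∈ Mwedge ι, nleW u p ∧ nleW u q

/-- The `m`-operation of `M^∧(G,Y)`: `m(A, g) = (Γ_ḡ^∧, g)`. -/
def mW (p : Elt X G) : Elt X G := (clo (gammaBar p.2), p.2)

/-- Natural partial order of `M(G,Y)`. -/
def nleM (p q : Elt X G) : Prop := p = mulM (mulM p (invM p)) q

/-- Minimum group congruence `σ` of `M(G,Y)`. -/
def sigmaM (ι : X → G) (p q : Elt X G) : Prop :=
  ∃ u ∈ Mset ι, nleM u p ∧ nleM u q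

end FInvPaper

namespace FInvPaper

/-- The domain `D_g = {Γ ∈ 𝒳_Y : g ∈ V(Γ)}` of the partial translation by `g`. -/
def Dset {X G : Type*} [Group G] (ι : X → G) (g : G) : Set (Graph X G) :=
  {Γ | Γ ∈ XY ι ∧ g ∈ Γ.1}

theorem gmul_one' {X G : Type*} [Group G] (Γ : Graph X G) : gmul (1 : G) Γ = Γ := by
  simp [gmul]

theorem gmul_gmul' {X G : Type*} [Group G] (g h : G) (Γ : Graph X G) :
    gmul (g * h) Γ = gmul g (gmul h Γ) := by
  simp only [gmul, Set.image_image, mul_assoc]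

theorem gmul_gunion' {X G : Type*} [Group G] (g : G) (Γ Δ : Graph X G) :
    gmul g (gunion Γ Δ) = gunion (gmul g Γ) (gmul g Δ) := by
  simp [gmul, gunion, Set.image_union]

theorem gsub_gmul' {X G : Type*} [Group G] (g : G) (Γ Δ : Graph X G) (h : gsub Γ Δ) :
    gsub (gmul g Γ) (gmul g Δ) :=
  ⟨Set.image_mono h.1, Set.image_mono h.2⟩

theorem eqvGen_gmul' {X G : Type*} [Group G] (ι : X → G) (g : G) (Γ : Graph X G) {a b : G}
    (h : Relation.EqvGen (edgeRel ι Γ) a b) :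
    Relation.EqvGen (edgeRel ι (gmul g Γ)) (g * a) (g * b) := by
  induction h with
  | rel a b h =>
    obtain ⟨y, hy, rfl⟩ := h
    exact .rel _ _ ⟨y, ⟨(a, y), hy, rfl⟩, (mul_assoc _ _ _).symm⟩
  | refl a => exact .refl _
  | symm a b _ ih => exact .symm _ _ ih
  | trans a b c _ _ ih1 ih2 => exact .trans _ _ _ ih1 ih2

theorem gmul_mem' {X G : Type*} [Group G] (ι : X → G) (g : G) (Γ : Graph X G)
    (h : Γ ∈ Dset ι g⁻¹) : gmul g Γ ∈ Dset ι g := by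
  obtain ⟨⟨⟨hV, hE, h1, hs⟩, hc⟩, hg⟩ := h
  refine ⟨⟨⟨hV.image _, hE.image _, ⟨g⁻¹, hg, mul_inv_cancel g⟩, ?_⟩, ?_⟩, ⟨1, h1, mul_one g⟩⟩
  · rintro _ ⟨e, he, rfl⟩
    exact ⟨⟨_, (hs e he).1, rfl⟩, ⟨_, (hs e he).2, (mul_assoc _ _ _).symm⟩⟩
  · rintro _ ⟨v, hv, rfl⟩
    have := eqvGen_gmul' ι g Γ (.trans _ _ _ (.symm _ _ (hc _ hg)) (hc v hv))
    rwa [mul_inv_cancel] at this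

theorem gammaBar_mem' {X G : Type*} [Group G] (ι : X → G) (g : G) :
    (gammaBar g : Graph X G) ∈ Dset ι g := by
  refine ⟨⟨⟨by simp [gammaBar], by simp [gammaBar], by simp [gammaBar], ?_⟩, ?_⟩,
    by simp [gammaBar]⟩
  · simp [gammaBar, iotaY]
  · rintro v (rfl | rfl)
    · exact .refl _
    · exact .rel _ _ ⟨Sum.inr v, rfl, by simp [iotaY]⟩

/-- For each `g ∈ G`, the set `D_g = {Γ ∈ 𝒳_Y : g ∈ V(Γ)}`
is an order ideal of `(𝒳_Y, ⊇)` (nonempty, and downward closed for the reverse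
inclusion order, i.e. closed under passing to larger subgraphs), and the maps
`φ_g : D_{g⁻¹} → D_g`, `Γ ↦ gΓ`, form a partial action of `G` on `𝒳_Y` by order
isomorphisms between order ideals; moreover
`φ_g(φ_{g⁻¹}(A) ∪ B) = A ∪ gB` for all `(A,g), (B,h) ∈ M(G,Y)`, so the partial
action product `𝒳_Y ⋊ G` coincides with `M(G,Y)`. -/
theorem partialAction_XY {X G : Type*} [Nonempty X] [Group G] (ι : X → G)
    (hgen : Subgroup.closure (Set.range ι) = ⊤) :
    -- each `D g` is an order ideal for reverse inclusion
    (∀ g : G, (Dset ι g).Nonempty ∧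
      ∀ Γ ∈ XY ι, ∀ Δ ∈ Dset ι g, gsub Δ Γ → Γ ∈ Dset ι g) ∧
    -- `φ_g` maps `D g⁻¹` into `D g`
    (∀ g : G, ∀ Γ ∈ Dset ι g⁻¹, gmul g Γ ∈ Dset ι g) ∧
    -- `φ_g` is an order embedding of `D g⁻¹`
    (∀ g : G, ∀ Γ ∈ Dset ι g⁻¹, ∀ Δ ∈ Dset ι g⁻¹,
      (gsub (gmul g Γ) (gmul g Δ) ↔ gsub Γ Δ)) ∧
    -- `φ_g` maps `D g⁻¹` onto `D g`
    (∀ g : G, ∀ Δ ∈ Dset ι g, ∃ Γ ∈ Dset ι g⁻¹, gmul g Γ = Δ) ∧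
    -- `D 1 = 𝒳_Y` and `φ_1 = id`
    (Dset ι (1 : G) = XY ι) ∧
    (∀ Γ : Graph X G, gmul (1 : G) Γ = Γ) ∧
    -- `φ_{g⁻¹} = (φ_g)⁻¹`
    (∀ g : G, ∀ Γ ∈ Dset ι g⁻¹, gmul g⁻¹ (gmul g Γ) = Γ) ∧
    -- compatibility with composition
    (∀ g h : G, ∀ Γ ∈ Dset ι h⁻¹, gmul h Γ ∈ Dset ι g⁻¹ →
      Γ ∈ Dset ι (g * h)⁻¹ ∧ gmul (g * h) Γ = gmul g (gmul h Γ)) ∧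
    -- the partial action product coincides with `M(G,Y)`
    (∀ p q : Elt X G, p ∈ Mset ι → q ∈ Mset ι →
      gmul p.2 (gunion (gmul p.2⁻¹ p.1) q.1) = gunion p.1 (gmul p.2 q.1)) := by
  have hinv : ∀ (g : G) (Γ : Graph X G), gmul g⁻¹ (gmul g Γ) = Γ := fun g Γ => by
    rw [← gmul_gmul', inv_mul_cancel, gmul_one']
  have hinv2 : ∀ (g : G) (Γ : Graph X G), gmul g (gmul g⁻¹ Γ) = Γ := fun g Γ => by
    rw [← gmul_gmul', mul_inv_cancel, gmul_one']
  refine ⟨fun g => ⟨⟨_, gammaBar_mem' ι g⟩, fun Γ hΓ Δ hΔ h => ⟨hΓ, h.1 hΔ.2⟩⟩,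
    gmul_mem' ι, ?_, ?_, ?_, gmul_one', fun g Γ _ => hinv g Γ, ?_, ?_⟩
  · intro g Γ _ Δ _
    refine ⟨fun h => ?_, gsub_gmul' g Γ Δ⟩
    have := gsub_gmul' g⁻¹ _ _ h
    rwa [hinv, hinv] at this
  · intro g Δ hΔ
    exact ⟨gmul g⁻¹ Δ, gmul_mem' ι g⁻¹ Δ (by rwa [inv_inv]), hinv2 g Δ⟩
  · ext Γ
    exact ⟨fun h => h.1, fun h => ⟨h, h.1.2.2.1⟩⟩
  · rintro g h Γ hΓ ⟨_, v, hv, hvg⟩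
    refine ⟨⟨hΓ.1, ?_⟩, gmul_gmul' g h Γ⟩
    have : v = (g * h)⁻¹ := by
      rw [mul_inv_rev, ← hvg]; simp
    exact this ▸ hv
  · intro p q _ _
    rw [gmul_gunion', hinv2]

end FInvPaper
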